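/- The multiset buffer structure on finite multisets over an arbitrary type M of messages (with decidable equality) — with empty buffer b₀ the empty multiset, insert(m)(b) adding one occurrence of m to b (always defined), and remove(m)(b) defined if and only if m ∈ b, in which case the result deletes one occurrence of m from b — satisfies all eight buffer axioms B1–B8. -/

import Mathlib

/-!
The argument rests on one commutation fact: a sequence `σ` of operations that never removes `m`
acts on `m ::ₘ b` exactly as it acts on `b`, with the extra occurrence of `m` carried along
(`applySeq_cons`). Insertions commute with `m ::ₘ ·` by `Multiset.cons_swap`, and removals of
messages other than `m` do so by `bagRemove_cons_of_ne`. B5 and B8 are read off from this, the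
final removal of `m` in B8 cancelling the extra occurrence; the other axioms concern a single
insertion and removal.
-/

/-- Operations on a buffer: insert or remove a message. -/
inductive BOp (M : Type) where
  | ins (m : M)
  | rem (m : M)

/-- Apply a single buffer operation. -/
def applyOp {M B : Type} (ins rem : M → B → Option B) : BOp M → B → Option B
  | .ins m, b => ins m b
  | .rem m, b => rem m b

/-- Apply a finite sequence of buffer operations, left to right. -/
def applySeq {M B : Type} (ins rem : M → B → Option B) : List (BOp M) → B → Option B
  | [], b => some b
  | op :: σ, b => (applyOp ins rem op b).bind (applySeq ins rem σ)

/-- The eight buffer axioms B1–B8 for a buffer structure with contents `B`,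
partial operations `ins`, `rem` and empty buffer `b0`. -/
structure BufferAxioms (M B : Type) (ins rem : M → B → Option B) (b0 : B) : Prop where
  b1 : ∀ (m : M) (b : B), (ins m b).isSome
  b2 : ∀ m : M, ((ins m b0).bind (rem m)).isSome
  b3 : ∀ m : M, rem m b0 = none
  b4 : ∀ (m m' : M) (b : B), (rem m b).isSome → ((ins m' b).bind (rem m)).isSome
  b5 : ∀ (m : M) (b : B) (σ : List (BOp M)), BOp.rem m ∉ σ →
        ((ins m b).bind (applySeq ins rem σ)).isSome → (applySeq ins rem σ b).isSome
  b6 : ∀ (m : M) (b : B), (rem m b).isSome →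
        (ins m b).bind (rem m) = (rem m b).bind (ins m)
  b7 : ∀ (m m' : M) (b : B), m ≠ m' →
        (ins m b).bind (rem m') = (rem m' b).bind (ins m)
  b8 : ∀ (m : M) (b : B) (σ : List (BOp M)), rem m b = none → BOp.rem m ∉ σ →
        (((ins m b).bind (applySeq ins rem σ)).bind (rem m)).isSome →
        ((ins m b).bind (applySeq ins rem σ)).bind (rem m) = applySeq ins rem σ b


/-- Multiset removal: `remove m b` is defined iff `m ∈ b`, deleting one occurrence of `m`. -/
def bagRemove {M : Type} [DecidableEq M] (m : M) (b : Multiset M) : Option (Multiset M) :=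
  if m ∈ b then some (b.erase m) else none

theorem bagRemove_cons_self {M : Type} [DecidableEq M] (m : M) (b : Multiset M) :
    bagRemove m (m ::ₘ b) = some b := by
  simp [bagRemove]

theorem bagRemove_cons_of_ne {M : Type} [DecidableEq M] {m m' : M} (h : m ≠ m')
    (b : Multiset M) :
    bagRemove m' (m ::ₘ b) = (bagRemove m' b).map (m ::ₘ ·) := by
  by_cases hb : m' ∈ b
  · simp [bagRemove, hb, Multiset.erase_cons_tail b h]
  · simp [bagRemove, hb, h.symm]

/-- A sequence without removals of `m` commutes with adding one occurrence of `m`,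
definedness included. -/
theorem applySeq_cons {M : Type} [DecidableEq M] (m : M) (σ : List (BOp M))
    (hσ : BOp.rem m ∉ σ) (b : Multiset M) :
    applySeq (fun m b => some (m ::ₘ b)) (fun m b => bagRemove m b) σ (m ::ₘ b) =
      (applySeq (fun m b => some (m ::ₘ b)) (fun m b => bagRemove m b) σ b).map (m ::ₘ ·) := by
  induction σ generalizing b with
  | nil => rfl
  | cons op σ ih =>
    rw [List.mem_cons, not_or] at hσ
    cases op with
    | ins m' =>
      simp only [applySeq, applyOp, Option.bind_some]
      rw [Multiset.cons_swap, ih hσ.2]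
    | rem m' =>
      have hne : m ≠ m' := fun h => hσ.1 (by rw [h])
      simp only [applySeq, applyOp, bagRemove_cons_of_ne hne]
      cases bagRemove m' b with
      | none => rfl
      | some c => exact ih hσ.2 c

/-- The multiset buffer structure (empty buffer `0`, insert adds one occurrence,
remove deletes one occurrence of a present message) satisfies all eight buffer
axioms B1–B8. -/
theorem multiset_satisfies_buffer_axioms (M : Type) [DecidableEq M] :
    BufferAxioms M (Multiset M) (fun m b => some (m ::ₘ b)) (fun m b => bagRemove m b) 0 := by
  refine ⟨?_, ?_, ?_, ?_, ?_, ?_, ?_, ?_⟩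
  · intro m b
    rfl
  · intro m
    simp [bagRemove]
  · intro m
    simp [bagRemove]
  · intro m m' b h
    by_cases hm : m' = m
    · subst hm
      simp [bagRemove_cons_self]
    · simpa [bagRemove_cons_of_ne hm] using h
  · intro m b σ hσ h
    simpa [applySeq_cons m σ hσ] using h
  · intro m b h
    have hb : m ∈ b := by
      by_contra hb
      simp [bagRemove, hb] at h
    simp [bagRemove, hb, Multiset.cons_erase hb]
  · intro m m' b h
    simp only [Option.bind_some, bagRemove_cons_of_ne h]
    cases bagRemove m' b <;> rfl
  · intro m b σ _ hσ _
    simp only [Option.bind_some, applySeq_cons m σ hσ]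
    cases applySeq (fun m b => some (m ::ₘ b)) (fun m b => bagRemove m b) σ b with
    | none => rfl
    | some c => exact bagRemove_cons_self m c
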